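/- arXiv:1607.07211 — 3 statements merged into one kernel-verified Lean document; each statement's English description precedes it below -/
import Mathlib

section
/- The permutation-invariant Kronecker delta is idempotent under contraction: for ι a finite type with decidable equality and all tuples i, j : Fin N → ι, one has Σ_{α : Fin N → ι} δ_{i;α} · δ_{α;j} = δ_{i;j}, where the sum runs over all tuples α. -/
/-- The permutation-invariant Kronecker delta
`δ_{u;v} = (1/S!) · Σ_{σ ∈ S_S} ∏_{k} [u_k = v_{σ(k)}]`. -/
noncomputable def permDelta {ι : Type*} [DecidableEq ι] {S : ℕ} (u v : Fin S → ι) : ℂ :=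
  (S.factorial : ℂ)⁻¹ *
    ∑ σ : Equiv.Perm (Fin S), ∏ k : Fin S, if u k = v (σ k) then 1 else 0

/-! Summing a function against `δ_{u;·}` averages it over the rearrangements `u ∘ σ` of `u`, so it
returns the value at `u` of any permutation-invariant function, such as `δ_{·;v}`. -/

section PermDelta

open Equiv

variable {ι : Type*} [DecidableEq ι] {N : ℕ}

theorem permDelta_eq_sum_ite (u v : Fin N → ι) :
    permDelta u v = (N.factorial : ℂ)⁻¹ * ∑ σ : Perm (Fin N), if u = v ∘ σ then 1 else 0 := by
  simp only [permDelta, Fintype.prod_boole]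
  congr! 3
  exact funext_iff.symm

theorem permDelta_comm (u v : Fin N → ι) : permDelta u v = permDelta v u := by
  simp only [permDelta_eq_sum_ite]
  congr 1
  refine Fintype.sum_equiv (Equiv.inv _) _ _ fun σ => if_congr ?_ rfl rfl
  exact eq_comm.trans (σ.eq_comp_symm v u).symm

theorem permDelta_comp_perm_left (u v : Fin N → ι) (σ : Perm (Fin N)) :
    permDelta (u ∘ σ) v = permDelta u v := by
  simp only [permDelta_eq_sum_ite]
  congr 1
  refine Fintype.sum_equiv (Equiv.mulRight σ⁻¹) _ _ fun τ => if_congr ?_ rfl rfl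
  exact (σ.eq_comp_symm u (v ∘ τ)).symm

variable {E : Type*} [AddCommMonoid E] [Module ℂ E] [TopologicalSpace E] [ContinuousAdd E]
  [ContinuousConstSMul ℂ E]

theorem hasSum_permDelta_smul (u : Fin N → ι) (f : (Fin N → ι) → E) :
    HasSum (fun α => permDelta u α • f α)
      ((N.factorial : ℂ)⁻¹ • ∑ σ : Perm (Fin N), f (u ∘ σ)) := by
  have hasSum_term (σ : Perm (Fin N)) :
      HasSum (fun α => if α = u ∘ σ then f α else 0) (f (u ∘ σ)) := by
    simpa only [if_true] using
      hasSum_single (f := fun α => if α = u ∘ σ then f α else 0) (u ∘ σ) fun _ hα => if_neg hα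
  simpa only [permDelta_comm u, permDelta_eq_sum_ite, mul_smul, Finset.sum_smul, ite_smul,
    one_smul, zero_smul] using
    (hasSum_sum fun σ _ => hasSum_term σ).const_smul (N.factorial : ℂ)⁻¹

theorem hasSum_permDelta_smul_of_comp_perm {u : Fin N → ι} {f : (Fin N → ι) → E}
    (hf : ∀ σ : Perm (Fin N), f (u ∘ σ) = f u) :
    HasSum (fun α => permDelta u α • f α) (f u) := by
  have average_eq : (N.factorial : ℂ)⁻¹ • ∑ σ : Perm (Fin N), f (u ∘ σ) = f u := by
    have hN : (N.factorial : ℂ) ≠ 0 := Nat.cast_ne_zero.mpr N.factorial_ne_zero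
    simp only [hf, Finset.sum_const, Finset.card_univ, Fintype.card_perm, Fintype.card_fin]
    rw [← Nat.cast_smul_eq_nsmul ℂ, inv_smul_smul₀ hN]
  exact average_eq ▸ hasSum_permDelta_smul u f

theorem permDelta_contraction_general (u v : Fin N → ι) :
    HasSum (fun α => permDelta u α * permDelta α v) (permDelta u v) :=
  hasSum_permDelta_smul_of_comp_perm (permDelta_comp_perm_left u v)

end PermDelta

/-- The permutation-invariant Kronecker delta is idempotent under contraction:
`Σ_α δ_{i;α} · δ_{α;j} = δ_{i;j}`. -/
theorem permDelta_contraction {ι : Type*} [Fintype ι] [DecidableEq ι] {N : ℕ}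
    (i j : Fin N → ι) :
    ∑ α : Fin N → ι, permDelta i α * permDelta α j = permDelta i j :=
  (hasSum_fintype _).unique (permDelta_contraction_general i j)
end

section
/- (Lemma 1, Bargmann realization.) Let ι be a type with decidable equality, M ≤ N natural numbers, i : Fin M → ι and j : Fin N → ι. In MvPolynomial ι ℂ, the iterated partial derivative of the monomial X_{j_1}⋯X_{j_N} satisfies (∂_{i_1}∘⋯∘∂_{i_M})(X_{j_1}⋯X_{j_N}) = M! · Σ_{α} δ_{i; j∘α} · ∏_{l ∉ range α} X_{j_l}, where the sum runs over all strictly monotone maps α : Fin M → Fin N (i.e. over all choices 1 ≤ α_1 < ⋯ < α_M ≤ N), δ_{i; j∘α} is the permutation-invariant Kronecker delta of the M-tuples i and (j(α_1),…,j(α_M)), and the product of variables runs over those positions l of j not in the range of α. -/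
/-- The iterated formal partial derivative `∂_{i_1} ∘ ⋯ ∘ ∂_{i_M}` in the Bargmann
realization of bosonic Fock space (annihilation operators). -/
noncomputable def pderivs {ι : Type*} [DecidableEq ι] {M : ℕ} (i : Fin M → ι)
    (p : MvPolynomial ι ℂ) : MvPolynomial ι ℂ :=
  (List.ofFn i).foldr (fun a q => MvPolynomial.pderiv a q) p

/-!
Derivations `D a` and elements `x l` satisfying the commutation relations `D a (x l) = c a l` obey a
Wick-type formula. By the Leibniz rule, applying `D (i 0)`, …, `D (i (M - 1))` to `∏ l, x l` amounts
to letting the derivations strike out distinct factors, so the result is a sum over embeddings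
`e : Fin M ↪ κ` recording which factor each derivation strikes. Grouping the embeddings by their
range `s` leaves the permanent of the square matrix with entries `c (i k) l`, `l ∈ s`. For partial
derivatives and variables these entries are Kronecker deltas, and the permanent is `M! * permDelta`.
-/

section Derivation

open Finset

variable {ι κ R A : Type*} [CommSemiring R] [CommSemiring A] [Algebra R A]

theorem derivation_prod {B : Type*} [AddCommMonoid B] [Module A B] [Module R B] [DecidableEq κ]
    (D : Derivation R A B) (x : κ → A) (s : Finset κ) :
    D (∏ l ∈ s, x l) = ∑ l ∈ s, (∏ m ∈ s.erase l, x m) • D (x l) := by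
  induction s using Finset.induction_on with
  | empty => simp
  | insert b s hb ih =>
    have erase_term : ∀ l ∈ s, ∏ m ∈ (insert b s).erase l, x m = x b * ∏ m ∈ s.erase l, x m := by
      intro l hl
      rw [erase_insert_of_ne (ne_of_mem_of_not_mem hl hb).symm,
        prod_insert (mt mem_of_mem_erase hb)]
    rw [prod_insert hb, D.leibniz, ih, sum_insert hb, erase_insert hb, add_comm, smul_sum]
    congr 1
    exact sum_congr rfl fun l hl => by rw [erase_term l hl, mul_smul]

theorem sum_embedding_fin_succ {β : Type*} [AddCommMonoid β] [Fintype κ] [DecidableEq κ] {M : ℕ}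
    (f : (Fin (M + 1) ↪ κ) → β) :
    ∑ e, f e = ∑ e : Fin M ↪ κ, ∑ l : {l // l ∉ Set.range e},
      f ((Equiv.embeddingFinSucc M κ).symm ⟨e, l⟩) := by
  rw [← (Equiv.embeddingFinSucc M κ).symm.sum_comp, Fintype.sum_sigma]

theorem compl_map_embeddingFinSucc_symm [Fintype κ] [DecidableEq κ] {M : ℕ} (e : Fin M ↪ κ)
    (l : {l // l ∉ Set.range e}) :
    (univ.map ((Equiv.embeddingFinSucc M κ).symm ⟨e, l⟩))ᶜ = (univ.map e)ᶜ.erase l := by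
  ext m
  simp [Fin.exists_fin_succ, eq_comm]

theorem prod_embeddingFinSucc_symm {β : Type*} [CommMonoid β] {M : ℕ} (w : Fin (M + 1) → κ → β)
    (e : Fin M ↪ κ) (l : {l // l ∉ Set.range e}) :
    ∏ k, w k ((Equiv.embeddingFinSucc M κ).symm ⟨e, l⟩ k) = w 0 l * ∏ k, w k.succ (e k) := by
  rw [Fin.prod_univ_succ]
  simp

theorem foldr_derivation_prod_eq_sum_embedding [Fintype κ] [DecidableEq κ] {M : ℕ}
    (D : ι → Derivation R A A) (i : Fin M → ι) (x : κ → A) (c : Matrix ι κ R)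
    (hc : ∀ a l, D a (x l) = algebraMap R A (c a l)) :
    (List.ofFn i).foldr (fun a p => D a p) (∏ l, x l) =
      ∑ e : Fin M ↪ κ, (∏ k, c (i k) (e k)) • ∏ l ∈ (univ.map e)ᶜ, x l := by
  induction M with
  | zero => simp
  | succ M ih =>
    rw [List.ofFn_succ, List.foldr_cons, ih, map_sum, sum_embedding_fin_succ]
    refine sum_congr rfl fun e _ => ?_
    rw [Derivation.map_smul, derivation_prod, smul_sum,
      sum_subtype (p := fun l => l ∉ Set.range e) _ (by simp)]
    refine sum_congr rfl fun l _ => ?_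
    rw [compl_map_embeddingFinSucc_symm, prod_embeddingFinSucc_symm (fun k m => c (i k) m), hc,
      smul_eq_mul, mul_comm (∏ m ∈ _, x m), ← Algebra.smul_def, smul_smul, mul_comm (c _ _)]

end Derivation

section Subset

open Finset

variable {κ : Type*} [LinearOrder κ] {M : ℕ}

/-- The embedding that lists the elements of the `M`-element set `s` in the order prescribed by
`σ`: it sends `k` to the `σ k`-th smallest element of `s`. -/
def permutedEnum (p : {s : Finset κ // #s = M} × Equiv.Perm (Fin M)) : Fin M ↪ κ :=
  p.2.toEmbedding.trans (p.1.1.orderEmbOfFin p.1.2).toEmbedding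

theorem map_permutedEnum_univ (s : {s : Finset κ // #s = M}) (σ : Equiv.Perm (Fin M)) :
    univ.map (permutedEnum (s, σ)) = s := by
  rw [permutedEnum, ← map_map, map_univ_equiv, map_orderEmbOfFin_univ]

theorem permutedEnum_injective :
    Function.Injective (permutedEnum : {s : Finset κ // #s = M} × Equiv.Perm (Fin M) → _) := by
  rintro ⟨s, σ⟩ ⟨t, τ⟩ h
  obtain rfl : s = t :=
    Subtype.ext (by rw [← map_permutedEnum_univ s σ, h, map_permutedEnum_univ])
  have : σ = τ := Equiv.ext fun k => (s.1.orderEmbOfFin s.2).injective (DFunLike.congr_fun h k)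
  rw [this]

theorem permutedEnum_bijective [Finite κ] :
    Function.Bijective (permutedEnum : {s : Finset κ // #s = M} × Equiv.Perm (Fin M) → _) := by
  have := Fintype.ofFinite κ
  refine (Fintype.bijective_iff_injective_and_card _).2 ⟨permutedEnum_injective, ?_⟩
  rw [Fintype.card_prod, Fintype.card_finset_len, Fintype.card_perm, Fintype.card_embedding_eq,
    Fintype.card_fin, Nat.descFactorial_eq_factorial_mul_choose, mul_comm]

theorem sum_embedding_eq_sum_subset_sum_perm {β : Type*} [AddCommMonoid β] [Fintype κ]
    (f : (Fin M ↪ κ) → β) :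
    ∑ e, f e = ∑ s : {s : Finset κ // #s = M}, ∑ σ, f (permutedEnum (s, σ)) := by
  rw [← permutedEnum_bijective.sum_comp, Fintype.sum_prod_type]

theorem sum_perm_prod_permutedEnum {R : Type*} [CommSemiring R] (c : Matrix (Fin M) κ R)
    (s : {s : Finset κ // #s = M}) :
    ∑ σ, ∏ k, c k (permutedEnum (s, σ) k) =
      (c.submatrix id (s.1.orderEmbOfFin s.2)).permanent := by
  rw [← Matrix.permanent_transpose]
  rfl

end Subset

theorem pderivs_monomial_general {ι κ R A : Type*} [CommSemiring R] [CommSemiring A] [Algebra R A]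
    [Fintype κ] [LinearOrder κ] {M : ℕ} (D : ι → Derivation R A A) (i : Fin M → ι) (x : κ → A)
    (c : Matrix ι κ R) (hc : ∀ a l, D a (x l) = algebraMap R A (c a l)) :
    (List.ofFn i).foldr (fun a p => D a p) (∏ l, x l) =
      ∑ s : {s : Finset κ // s.card = M},
        (c.submatrix i (s.1.orderEmbOfFin s.2)).permanent • ∏ l ∈ s.1ᶜ, x l := by
  rw [foldr_derivation_prod_eq_sum_embedding D i x c hc, sum_embedding_eq_sum_subset_sum_perm]
  refine Finset.sum_congr rfl fun s _ => ?_
  simp only [map_permutedEnum_univ]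
  rw [← Finset.sum_smul]
  exact congrArg (· • _) (sum_perm_prod_permutedEnum (c.submatrix i id) s)

theorem factorial_mul_permDelta {ι : Type*} [DecidableEq ι] {M : ℕ} (u v : Fin M → ι) :
    (M.factorial : ℂ) * permDelta u v =
      (Matrix.of fun k l => if u k = v l then (1 : ℂ) else 0).permanent := by
  rw [permDelta, mul_inv_cancel_left₀ (Nat.cast_ne_zero.2 M.factorial_ne_zero),
    ← Matrix.permanent_transpose]
  rfl

theorem factorial_mul_C_permDelta_mul {ι : Type*} [DecidableEq ι] {M : ℕ} (u v : Fin M → ι)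
    (p : MvPolynomial ι ℂ) :
    (M.factorial : MvPolynomial ι ℂ) * (MvPolynomial.C (permDelta u v) * p) =
      (Matrix.of fun k l => if u k = v l then (1 : ℂ) else 0).permanent • p := by
  rw [← factorial_mul_permDelta, MvPolynomial.smul_eq_C_mul, map_mul, map_natCast, mul_assoc]

theorem pderiv_X_eq_algebraMap {ι R : Type*} [CommSemiring R] [DecidableEq ι] (a b : ι) :
    MvPolynomial.pderiv a (MvPolynomial.X b) =
      algebraMap R (MvPolynomial ι R) (if a = b then 1 else 0) := by
  rw [MvPolynomial.pderiv_X, Pi.single_apply, apply_ite (algebraMap R _), map_one, map_zero]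
  simp only [eq_comm]

/-- Lemma 1 (Bargmann realization): for `M ≤ N`,
`(∂_{i_1}∘⋯∘∂_{i_M})(X_{j_1}⋯X_{j_N})
  = M! · Σ_{1≤α_1<⋯<α_M≤N} δ_{i;j∘α} ∏_{l ∉ range α} X_{j_l}`,
where the sum runs over all `M`-element subsets `s` of `Fin N` (equivalently, over all
strictly monotone maps `α = s.orderEmbOfFin : Fin M → Fin N`). -/
theorem pderivs_monomial {ι : Type*} [DecidableEq ι] {M N : ℕ} (hMN : M ≤ N)
    (i : Fin M → ι) (j : Fin N → ι) :
    pderivs i (∏ x : Fin N, MvPolynomial.X (j x)) =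
      (M.factorial : MvPolynomial ι ℂ) *
        ∑ s : {s : Finset (Fin N) // s.card = M},
          MvPolynomial.C (permDelta i (fun x => j (s.1.orderEmbOfFin s.2 x))) *
            ∏ l ∈ s.1ᶜ, MvPolynomial.X (j l) := by
  simp only [Finset.mul_sum, factorial_mul_C_permDelta_mul]
  exact pderivs_monomial_general MvPolynomial.pderiv i (fun l => MvPolynomial.X (j l))
    (.of fun a l => if a = j l then 1 else 0) fun a l => pderiv_X_eq_algebraMap a (j l)
end

section
/- (Generalized number-operator identity, Bargmann realization.) Let ι be a finite type with decidable equality, M ≤ N natural numbers, and j : Fin N → ι. In MvPolynomial ι ℂ, Σ_{i : Fin M → ι} X_{i_1}⋯X_{i_M} · (∂_{i_1}∘⋯∘∂_{i_M})(X_{j_1}⋯X_{j_N}) = (N!/(N−M)!) · X_{j_1}⋯X_{j_N}, where the sum runs over all M-tuples i of elements of ι. In particular, for M = 1 this is Euler's identity for the degree-N monomial, i.e. the number operator acting with eigenvalue N. -/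
/-! If `p` is homogeneous of degree `N`, then `∂_{i_1} ⋯ ∂_{i_M} p` is homogeneous of degree
`N - M`, so by Euler's identity summing over one further, outermost index brings out the factor
`N - M`. Iterating gives the falling factorial `N (N - 1) ⋯ (N - M + 1)`. -/

section

open MvPolynomial

variable {R σ : Type*} [CommSemiring R]

/-- The iterated partial derivative `∂_{a_1} ∘ ⋯ ∘ ∂_{a_k}` along the list `[a_1, …, a_k]`, over an
arbitrary coefficient semiring. Lists replace the tuples of `pderivs` so that the outermost
derivative can be split off by recursion. -/
noncomputable def iteratedPDeriv (l : List σ) (p : MvPolynomial σ R) : MvPolynomial σ R :=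
  l.foldr (fun a q => pderiv a q) p

theorem pderivs_eq_iteratedPDeriv {ι : Type*} [DecidableEq ι] {M : ℕ} (i : Fin M → ι)
    (p : MvPolynomial ι ℂ) : pderivs i p = iteratedPDeriv (List.ofFn i) p := rfl

theorem iteratedPDeriv_nil (p : MvPolynomial σ R) : iteratedPDeriv [] p = p := rfl

theorem iteratedPDeriv_cons (a : σ) (l : List σ) (p : MvPolynomial σ R) :
    iteratedPDeriv (a :: l) p = pderiv a (iteratedPDeriv l p) := rfl

theorem isHomogeneous_iteratedPDeriv {n : ℕ} {p : MvPolynomial σ R} (hp : p.IsHomogeneous n)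
    (l : List σ) : (iteratedPDeriv l p).IsHomogeneous (n - l.length) := by
  induction l with
  | nil => exact hp
  | cons a l ih => exact ih.pderiv

theorem isHomogeneous_prod_X {κ : Type*} (s : Finset κ) (j : κ → σ) :
    (∏ x ∈ s, X (j x) : MvPolynomial σ R).IsHomogeneous s.card := by
  rw [Finset.card_eq_sum_ones]
  exact IsHomogeneous.prod s _ _ fun x _ => isHomogeneous_X R (j x)

theorem sum_fin_succ_arrow_eq_sum_sum_cons {ι A : Type*} [Fintype ι] [AddCommMonoid A] {M : ℕ}
    (f : (Fin (M + 1) → ι) → A) :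
    ∑ i, f i = ∑ i : Fin M → ι, ∑ a : ι, f (Fin.cons a i) := by
  rw [← (Fin.consEquiv fun _ => ι).sum_comp, Fintype.sum_prod_type_right]
  rfl

theorem sum_prod_X_mul_iteratedPDeriv_succ [Fintype σ] {N : ℕ} {p : MvPolynomial σ R}
    (hp : p.IsHomogeneous N) (M : ℕ) :
    ∑ i : Fin (M + 1) → σ, (∏ x, X (i x)) * iteratedPDeriv (List.ofFn i) p =
      (N - M) • ∑ i : Fin M → σ, (∏ x, X (i x)) * iteratedPDeriv (List.ofFn i) p := by
  rw [sum_fin_succ_arrow_eq_sum_sum_cons, Finset.smul_sum]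
  refine Finset.sum_congr rfl fun i _ => ?_
  have homogeneous : (iteratedPDeriv (List.ofFn i) p).IsHomogeneous (N - M) := by
    simpa only [List.length_ofFn] using isHomogeneous_iteratedPDeriv hp (List.ofFn i)
  calc ∑ a, (∏ x, X ((Fin.cons a i : Fin (M + 1) → σ) x)) *
          iteratedPDeriv (List.ofFn (Fin.cons a i : Fin (M + 1) → σ)) p
      = ∑ a, (∏ x, X (i x)) * (X a * pderiv a (iteratedPDeriv (List.ofFn i) p)) := by
        simp only [List.ofFn_cons, iteratedPDeriv_cons, Fin.prod_univ_succ, Fin.cons_zero,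
          Fin.cons_succ, mul_assoc, mul_left_comm]
    _ = (∏ x, X (i x)) * ((N - M) • iteratedPDeriv (List.ofFn i) p) := by
        rw [← Finset.mul_sum, homogeneous.sum_X_mul_pderiv]
    _ = (N - M) • ((∏ x, X (i x)) * iteratedPDeriv (List.ofFn i) p) := mul_smul_comm ..

theorem creation_annihilation_number_identity_general [Fintype σ] {N : ℕ}
    {p : MvPolynomial σ R} (hp : p.IsHomogeneous N) (M : ℕ) :
    ∑ i : Fin M → σ, (∏ x, X (i x)) * iteratedPDeriv (List.ofFn i) p =
      N.descFactorial M • p := by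
  induction M with
  | zero =>
    simp only [Fintype.sum_unique, Finset.univ_eq_empty, Finset.prod_empty, one_mul,
      List.ofFn_zero, iteratedPDeriv_nil, Nat.descFactorial_zero, one_smul]
  | succ M ih =>
    rw [sum_prod_X_mul_iteratedPDeriv_succ hp, ih, smul_smul, Nat.descFactorial_succ]

end

theorem cast_descFactorial_eq_factorial_div {K : Type*} [DivisionSemiring K] [CharZero K]
    {M N : ℕ} (hMN : M ≤ N) :
    (N.descFactorial M : K) = (N.factorial : K) / ((N - M).factorial : K) := by
  rw [Nat.descFactorial_eq_div hMN,
    Nat.cast_div_charZero (Nat.factorial_dvd_factorial (N.sub_le M))]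

/-- Generalized number-operator identity (Bargmann realization): for `M ≤ N`,
`Σ_{i : Fin M → ι} X_{i_1}⋯X_{i_M} · (∂_{i_1}∘⋯∘∂_{i_M})(X_{j_1}⋯X_{j_N})
  = (N!/(N−M)!) · X_{j_1}⋯X_{j_N}`. -/
theorem creation_annihilation_number_identity {ι : Type*} [Fintype ι] [DecidableEq ι]
    {M N : ℕ} (hMN : M ≤ N) (j : Fin N → ι) :
    ∑ i : Fin M → ι,
        (∏ x : Fin M, MvPolynomial.X (i x)) * pderivs i (∏ x : Fin N, MvPolynomial.X (j x)) =
      MvPolynomial.C ((N.factorial : ℂ) / ((N - M).factorial : ℂ)) *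
        ∏ x : Fin N, MvPolynomial.X (j x) := by
  rw [← cast_descFactorial_eq_factorial_div hMN, map_natCast, ← nsmul_eq_mul]
  simpa only [pderivs_eq_iteratedPDeriv, Finset.card_fin] using
    creation_annihilation_number_identity_general (isHomogeneous_prod_X Finset.univ j) M
end
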